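/- Let A, A', B, B' be convex polyhedral cones in ℝ³ with apex the origin O and non-empty interior, such that A, A', −B, −B' ⊂ {x : x₃ ≥ 0} and each of A, B, A', B' meets {x₃ = 0} only at O. Set F = A ∩ {x₃ = 1}, G = (−B) ∩ {x₃ = 1}, F' = A' ∩ {x₃ = 1}, G' = (−B') ∩ {x₃ = 1}, assume g_{A,B} = g_{A',B'}, let H = conv(F ∪ G) = conv(F' ∪ G') with vertices z₁,…,z_n in counterclockwise order, and assume hypotheses (1)–(3): (1) z_i ∈ F ∩ G iff z_i ∈ F' ∩ G'; (2) [z_i, z_{i+1}] is an edge of F or of G iff it is an edge of F' or of G'; (3) if z_i ∉ F ∩ G, the polygon among F and G containing z_i coincides in a neighbourhood of z_i with the polygon among F' and G' containing z_i. If z_i ∉ F ∩ G for some i, then the polygon among F and G which does not contain z_i and the polygon among F' and G' which does not contain z_i have equal −1-chord functions at z_i. -/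

import Mathlib

open MeasureTheory Pointwise

/-- The cross covariogram of sets `K, L ⊆ ℝ³`: `g_{K,L}(x) = λ₃(K ∩ (L + x))`. -/
noncomputable def crossCovariogram (K L : Set (EuclideanSpace ℝ (Fin 3)))
    (x : EuclideanSpace ℝ (Fin 3)) : ℝ :=
  (volume (K ∩ ((x + ·) '' L))).toReal

/-- A convex polyhedral cone with apex the origin: a finite intersection of closed
half-spaces whose boundary planes pass through the origin. -/
def IsPolyhedralCone (C : Set (EuclideanSpace ℝ (Fin 3))) : Prop :=
  ∃ S : Finset (EuclideanSpace ℝ (Fin 3)),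
    C = {x | ∀ s ∈ S, @inner ℝ _ _ s x ≤ (0 : ℝ)}

/-- The exposed face of a convex set `Q` in direction `w`. -/
def exposedFace (Q : Set (EuclideanSpace ℝ (Fin 3)))
    (w : EuclideanSpace ℝ (Fin 3)) : Set (EuclideanSpace ℝ (Fin 3)) :=
  {x ∈ Q | ∀ y ∈ Q, @inner ℝ _ _ w y ≤ @inner ℝ _ _ w x}

/-- `S` is an edge (a one-dimensional exposed face) of `Q`. -/
def IsEdgeOf (Q S : Set (EuclideanSpace ℝ (Fin 3))) : Prop :=
  (∃ w : EuclideanSpace ℝ (Fin 3), w ≠ 0 ∧ S = exposedFace Q w) ∧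
    Module.finrank ℝ (vectorSpan ℝ S) = 1

/-- The `−1`-chord function of `K` at `p`, evaluated on the line through `p` with unit
direction `u`: `∫_{K ∩ l} ‖x − p‖⁻² dλ₁(x)`. -/
noncomputable def chordFunctionNeg₁ (K : Set (EuclideanSpace ℝ (Fin 3)))
    (p u : EuclideanSpace ℝ (Fin 3)) : ℝ :=
  ∫ t in {t : ℝ | p + t • u ∈ K}, |t|⁻¹ ^ 2

/-!
Write `C = -B`, so that the cross covariogram is the convolution `1_A * 1_C`, and let `z` be a
vertex of `H` in `F` but not in `G`. Near `z` the cone `A` agrees with its tangent cone `D` at `z`,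
a wedge: the product of a quadrant and the line `ℝz`. As `z` is extreme in `H`, the cone `-C` meets
`D` only at the origin. Hence `1_A * 1_C` and `1_D * 1_C` agree near `z`, and since the latter is
homogeneous and invariant under translation along `z`, it is determined everywhere.

In coordinates adapted to `D`, the value of `1_D * 1_C` at `x` integrates, over the translated
quadrant ending at `x`, the lengths of the sections of `C` by lines parallel to `z`. Since the
quadrants generate the Borel sets of the plane, these lengths are determined almost everywhere,
hence everywhere by semicontinuity and the monotonicity of sections of a cone.

Finally the inversion `t ↦ 1 / t` carries `t⁻² dt` to Lebesgue measure and turns the chord of `G` on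
the line through `z` in direction `u` into the sections of `C` through `u` and `-u` parallel to `z`.
-/

section Cones

variable {E : Type*} [NormedAddCommGroup E] [NormedSpace ℝ E]

lemma exists_norm_le_mul_norm_add [ProperSpace E] {K L : ProperCone ℝ E}
    (hKL : ∀ x ∈ K, -x ∈ L → x = 0) :
    ∃ R : ℝ, 0 ≤ R ∧ ∀ x ∈ K, ∀ y ∈ L, ‖x‖ ≤ R * ‖x + y‖ := by
  have normalize_mem : ∀ x ∈ K, x ≠ 0 → ‖x‖⁻¹ • x ∈ (K : Set E) ∩ Metric.sphere 0 1 :=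
    fun x hx hx0 ↦ ⟨K.smul_mem hx (by positivity), by simp [norm_smul, hx0]⟩
  obtain hempty | hne := ((K : Set E) ∩ Metric.sphere 0 1).eq_empty_or_nonempty
  · refine ⟨0, le_rfl, fun x hx y _ ↦ ?_⟩
    have hx0 : x = 0 := by_contra fun hx0 ↦ (hempty ▸ normalize_mem x hx hx0 :)
    simp [hx0]
  have hcont : Continuous fun x : E ↦ Metric.infDist (-x) L :=
    (Metric.continuous_infDist_pt _).comp continuous_neg
  obtain ⟨m, ⟨hmK, hm⟩, hmin⟩ :=
    ((isCompact_sphere (0 : E) 1).inter_left K.isClosed).exists_isMinOn hne hcont.continuousOn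
  have hpos : 0 < Metric.infDist (-m) L := by
    refine (L.isClosed.notMem_iff_infDist_pos L.nonempty).1 fun hmL ↦ ?_
    simp [hKL m hmK hmL] at hm
  refine ⟨(Metric.infDist (-m) L)⁻¹, by positivity, fun x hx y hy ↦ ?_⟩
  obtain rfl | hx0 := eq_or_ne x 0
  · simpa using mul_nonneg (inv_nonneg.2 hpos.le) (norm_nonneg _)
  rw [← div_eq_inv_mul, le_div_iff₀ hpos, mul_comm, ← le_div_iff₀ (norm_pos_iff.2 hx0)]
  calc Metric.infDist (-m) L ≤ Metric.infDist (-(‖x‖⁻¹ • x)) L := hmin (normalize_mem x hx hx0)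
    _ ≤ dist (-(‖x‖⁻¹ • x)) (‖x‖⁻¹ • y) :=
      Metric.infDist_le_dist_of_mem (L.smul_mem hy (by positivity))
    _ = ‖x + y‖ / ‖x‖ := by
      rw [dist_eq_norm, ← neg_add', ← smul_add, norm_neg, norm_smul, norm_inv, norm_norm,
        div_eq_inv_mul]

lemma isClosed_add_of_forall_neg_mem [ProperSpace E] {K L : ProperCone ℝ E}
    (hKL : ∀ x ∈ K, -x ∈ L → x = 0) : IsClosed ((K : Set E) + (L : Set E)) := by
  obtain ⟨R, hR0, hR⟩ := exists_norm_le_mul_norm_add hKL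
  refine isClosed_of_closure_subset fun x hx ↦ ?_
  have hclosed :
      IsClosed ((K : Set E) ∩ Metric.closedBall 0 (R * (‖x‖ + 1)) + (L : Set E)) :=
    L.isClosed.add_left_of_isCompact ((isCompact_closedBall _ _).inter_left K.isClosed)
  have hlocal : Metric.ball 0 (‖x‖ + 1) ∩ ((K : Set E) + (L : Set E)) ⊆
      (K : Set E) ∩ Metric.closedBall 0 (R * (‖x‖ + 1)) + (L : Set E) := by
    rintro _ ⟨hball, k, hk, l, hl, rfl⟩
    rw [mem_ball_zero_iff] at hball
    refine Set.add_mem_add ⟨hk, mem_closedBall_zero_iff.2 ((hR k hk l hl).trans ?_)⟩ hl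
    gcongr
  exact Set.add_subset_add_right Set.inter_subset_left <| hclosed.closure_subset_iff.2 hlocal <|
    Metric.isOpen_ball.inter_closure ⟨mem_ball_zero_iff.2 (lt_add_one _), hx⟩

end Cones

section Convolution

open scoped ENNReal

/-- The convolution of the indicator functions of `K` and `L` at `x`. For sets in `ℝ³` it is
`g_{K,-L}(x)`, except that an infinite volume is not truncated to `0`. -/
noncomputable def convVolume {E : Type*} [AddGroup E] [MeasurableSpace E] (μ : Measure E)
    (K L : Set E) (x : E) : ℝ≥0∞ :=
  μ (K ∩ {w | x - w ∈ L})

lemma crossCovariogram_eq_toReal_convVolume (K L : Set (EuclideanSpace ℝ (Fin 3)))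
    (x : EuclideanSpace ℝ (Fin 3)) :
    crossCovariogram K L x = (convVolume volume K (-L) x).toReal := by
  rw [crossCovariogram, convVolume]
  congr 3
  ext w
  rw [Set.image_add_left, Set.mem_preimage, Set.mem_ofPred_eq, Set.mem_neg, neg_sub,
    sub_eq_neg_add]

lemma convVolume_comm {E : Type*} [AddCommGroup E] [MeasurableSpace E] [MeasurableAdd E]
    [MeasurableNeg E] (μ : Measure E) [μ.IsAddLeftInvariant] [μ.IsNegInvariant] {K L : Set E}
    (hK : MeasurableSet K) (hL : MeasurableSet L) :
    convVolume μ K L = convVolume μ L K := by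
  ext x
  have hsub := Measure.measurePreserving_sub_left μ x
  have hpre : K ∩ {w | x - w ∈ L} = (x - ·) ⁻¹' (L ∩ {w | x - w ∈ K}) := by
    ext w
    simp [and_comm]
  exact (congrArg μ hpre).trans
    (hsub.measure_preimage (hL.inter (hsub.measurable hK)).nullMeasurableSet)

variable {E : Type*} [NormedAddCommGroup E] [MeasurableSpace E] {μ : Measure E}

lemma support_convVolume_subset (K L : Set E) : Function.support (convVolume μ K L) ⊆ K + L := by
  intro x hx
  obtain ⟨w, hwK, hwL⟩ := nonempty_of_measure_ne_zero hx
  exact ⟨w, hwK, x - w, hwL, add_sub_cancel w x⟩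

lemma interior_add_interior_subset_support_convVolume [μ.IsOpenPosMeasure] (K L : Set E) :
    interior K + interior L ⊆ Function.support (convVolume μ K L) := by
  rintro _ ⟨a, ha, c, hc, rfl⟩
  have hopen : IsOpen (interior K ∩ {w | a + c - w ∈ interior L}) :=
    isOpen_interior.inter (isOpen_interior.preimage (by fun_prop))
  refine (hopen.measure_pos μ ⟨a, ha, by simpa using hc⟩).trans_le (measure_mono ?_) |>.ne'
  exact Set.inter_subset_inter interior_subset (Set.preimage_mono interior_subset)

variable [NormedSpace ℝ E]

lemma add_subset_closure_support_convVolume [μ.IsOpenPosMeasure] {K L : Set E}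
    (hK : Convex ℝ K) (hL : Convex ℝ L) (hKi : (interior K).Nonempty)
    (hLi : (interior L).Nonempty) : K + L ⊆ closure (Function.support (convVolume μ K L)) := by
  rintro _ ⟨a, ha, c, hc, rfl⟩
  refine closure_mono (interior_add_interior_subset_support_convVolume K L) ?_
  refine map_mem_closure₂ continuous_add ?_ ?_ fun _ ha _ hc ↦ Set.add_mem_add ha hc
  · exact hK.closure_interior_eq_closure_of_nonempty_interior hKi ▸ subset_closure ha
  · exact hL.closure_interior_eq_closure_of_nonempty_interior hLi ▸ subset_closure hc

lemma add_subset_add_of_convVolume_eq [ProperSpace E] [μ.IsOpenPosMeasure]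
    {K L K' L' : ProperCone ℝ E} (hKL : ∀ x ∈ K, -x ∈ L → x = 0)
    (hKi : (interior (K' : Set E)).Nonempty) (hLi : (interior (L' : Set E)).Nonempty)
    (h : convVolume μ K L = convVolume μ K' L') :
    (K' : Set E) + (L' : Set E) ⊆ (K : Set E) + (L : Set E) := by
  refine (add_subset_closure_support_convVolume (μ := μ) K'.convex L'.convex hKi hLi).trans ?_
  rw [(isClosed_add_of_forall_neg_mem hKL).closure_subset_iff, ← h]
  exact support_convVolume_subset _ _

lemma convVolume_ne_top [ProperSpace E] [IsFiniteMeasureOnCompacts μ] {K L : ProperCone ℝ E}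
    (hKL : ∀ x ∈ K, -x ∈ L → x = 0) (x : E) : convVolume μ K L x ≠ ∞ := by
  obtain ⟨R, -, hR⟩ := exists_norm_le_mul_norm_add hKL
  refine ((Metric.isBounded_closedBall (x := (0 : E)) (r := R * ‖x‖)).subset ?_).measure_lt_top.ne
  rintro w ⟨hwK, hwL⟩
  simpa using hR w hwK (x - w) hwL

lemma convVolume_add_left_of_neg_mem [BorelSpace E] [μ.IsAddLeftInvariant]
    {K : ProperCone ℝ E} {z : E} (hz : z ∈ K) (hz' : -z ∈ K) (L : Set E) (x : E) :
    convVolume μ K L (z + x) = convVolume μ K L x := by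
  have hzK : ∀ w, z + w ∈ K ↔ w ∈ K := fun w ↦
    ⟨fun h ↦ by simpa using K.add_mem hz' h, fun h ↦ K.add_mem hz h⟩
  rw [convVolume, convVolume, ← measure_preimage_add μ z]
  congr 1
  ext w
  simp [hzK]

lemma convVolume_smul [BorelSpace E] [FiniteDimensional ℝ E] [μ.IsAddHaarMeasure]
    (K L : ProperCone ℝ E) {ε : ℝ} (hε : 0 < ε) (x : E) :
    convVolume μ K L (ε • x) = ENNReal.ofReal (ε ^ Module.finrank ℝ E) * convVolume μ K L x := by
  have hsmul : ∀ (M : ProperCone ℝ E) (w : E), ε • w ∈ M ↔ w ∈ M := fun M _ ↦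
    PointedCone.smul_mem_iff (C := M.toPointedCone) hε
  have himage : (K : Set E) ∩ {w | ε • x - w ∈ L} = ε • ((K : Set E) ∩ {w | x - w ∈ L}) := by
    ext w
    rw [Set.mem_smul_set_iff_inv_smul_mem₀ hε.ne']
    simp [← hsmul K (ε⁻¹ • w), ← hsmul L (x - ε⁻¹ • w), smul_sub, hε.ne']
  calc convVolume μ K L (ε • x) = μ (ε • ((K : Set E) ∩ {w | x - w ∈ L})) := congrArg μ himage
    _ = _ := by rw [Measure.addHaar_smul, abs_of_pos (pow_pos hε _)]; rfl

end Convolution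

section ExtremeRays

variable {E : Type*} [AddCommGroup E] [Module ℝ E]

/-- The extremality of the ray through a point `z` of a cone `P`: no two points of `P` off the line
`ℝz` have sum `z`. -/
def SpansExtremeRay (P : Set E) (z : E) : Prop :=
  ∀ x ∈ P, ∀ y ∈ P, x + y = z → x ∈ Submodule.span ℝ {z}

lemma SpansExtremeRay.mono {P Q : Set E} {z : E} (h : SpansExtremeRay Q z) (hPQ : P ⊆ Q) :
    SpansExtremeRay P z :=
  fun x hx y hy ↦ h x (hPQ hx) y (hPQ hy)

lemma eq_one_of_mem_convexHull {ℓ : E →ₗ[ℝ] ℝ} {s : Set E} (hs : ∀ x ∈ s, ℓ x = 1) {x : E}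
    (hx : x ∈ convexHull ℝ s) : ℓ x = 1 :=
  convexHull_min hs (convex_hyperplane ℓ.isLinear 1) hx

lemma mem_smul_of_mem_cone {K : PointedCone ℝ E} {ℓ : E →ₗ[ℝ] ℝ}
    (hK : ∀ x ∈ K, x ≠ 0 → 0 < ℓ x) {s : Set E} (hs : s.Nonempty)
    (hKs : (K : Set E) ∩ {x | ℓ x = 1} ⊆ s) {x : E} (hx : x ∈ K) : 0 ≤ ℓ x ∧ x ∈ ℓ x • s := by
  obtain rfl | hx0 := eq_or_ne x 0
  · simp [Set.zero_smul_set hs]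
  have hpos := hK x hx hx0
  refine ⟨hpos.le, (ℓ x)⁻¹ • x, hKs ⟨K.smul_mem (inv_nonneg.2 hpos.le) hx, ?_⟩,
    smul_inv_smul₀ hpos.ne' x⟩
  simp [hpos.ne']

lemma spansExtremeRay_add_of_mem_extremePoints {K L : PointedCone ℝ E} {ℓ : E →ₗ[ℝ] ℝ}
    (hK : ∀ x ∈ K, x ≠ 0 → 0 < ℓ x) (hL : ∀ x ∈ L, x ≠ 0 → 0 < ℓ x) {z : E}
    (hz : z ∈ Set.extremePoints ℝ
      (convexHull ℝ ((K : Set E) ∩ {x | ℓ x = 1} ∪ (L : Set E) ∩ {x | ℓ x = 1}))) :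
    SpansExtremeRay ((K : Set E) + (L : Set E)) z := by
  set s := (K : Set E) ∩ {x | ℓ x = 1} ∪ (L : Set E) ∩ {x | ℓ x = 1}
  obtain ⟨hzH, hzext⟩ := mem_extremePoints.1 hz
  have hℓz : ℓ z = 1 := eq_one_of_mem_convexHull (fun x hx ↦ hx.elim (·.2) (·.2)) hzH
  have homothety : ∀ x ∈ (K : Set E) + (L : Set E), 0 ≤ ℓ x ∧ x ∈ ℓ x • convexHull ℝ s := by
    rintro _ ⟨k, hk, l, hl, rfl⟩
    obtain ⟨hk0, hks⟩ := mem_smul_of_mem_cone hK ⟨z, hzH⟩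
      (Set.subset_union_left.trans (subset_convexHull ℝ s)) hk
    obtain ⟨hl0, hls⟩ := mem_smul_of_mem_cone hL ⟨z, hzH⟩
      (Set.subset_union_right.trans (subset_convexHull ℝ s)) hl
    refine ⟨by simpa using add_nonneg hk0 hl0, ?_⟩
    simpa [(convex_convexHull ℝ s).add_smul hk0 hl0] using Set.add_mem_add hks hls
  intro x hx y hy hxy
  obtain ⟨hx0, h, hh, hxh⟩ := homothety x hx
  obtain ⟨hy0, h', hh', hyh⟩ := homothety y hy
  simp only at hxh hyh
  have hsum : ℓ x + ℓ y = 1 := by rw [← map_add, hxy, hℓz]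
  obtain hx0 | hx0 := hx0.eq_or_lt
  · rw [← hxh, ← hx0, zero_smul]
    exact zero_mem _
  obtain hy0 | hy0 := hy0.eq_or_lt
  · rw [← hxy, ← hyh, ← hy0, zero_smul, add_zero]
    exact Submodule.mem_span_singleton_self x
  obtain ⟨rfl, -⟩ := hzext h hh h' hh' ⟨ℓ x, ℓ y, hx0, hy0, hsum, by rw [hxh, hyh, hxy]⟩
  exact Submodule.mem_span_singleton.2 ⟨_, hxh⟩

end ExtremeRays

section Tangent

open Filter
open scoped Topology

variable {E : Type*} [NormedAddCommGroup E] [NormedSpace ℝ E]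

/-- `D` is the tangent cone of the cone `A` at `z`, and `A` coincides with it near `z`. -/
structure IsLocalTangentCone (A D : ProperCone ℝ E) (z : E) : Prop where
  mem : z ∈ D
  neg_mem : -z ∈ D
  eventually_mem_iff : ∀ᶠ x in 𝓝 z, x ∈ A ↔ x ∈ D

lemma exists_pos_add_smul_of_eventually_nhds {p : E → Prop} {z : E}
    (h : ∀ᶠ x in 𝓝 z, p x) (v : E) : ∃ ε : ℝ, 0 < ε ∧ p (z + ε • v) := by
  have htendsto : Tendsto (fun ε : ℝ ↦ z + ε • v) (𝓝[>] 0) (𝓝 z) :=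
    tendsto_nhdsWithin_of_tendsto_nhds <|
      Continuous.tendsto' (by fun_prop) _ _ (by simp)
  exact ((eventually_mem_nhdsWithin).and (htendsto.eventually h)).exists

namespace IsLocalTangentCone

variable {A A' C C' D : ProperCone ℝ E} {z : E}

lemma add_mem_iff (h : IsLocalTangentCone A D z) (x : E) : z + x ∈ D ↔ x ∈ D :=
  ⟨fun hx ↦ by simpa using D.add_mem h.neg_mem hx, fun hx ↦ D.add_mem h.mem hx⟩

lemma mem_cone (h : IsLocalTangentCone A D z) : z ∈ A :=
  h.eventually_mem_iff.self_of_nhds.2 h.mem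

lemma le (h : IsLocalTangentCone A D z) : A ≤ D := by
  intro x hx
  obtain ⟨ε, hε, hiff⟩ := exists_pos_add_smul_of_eventually_nhds h.eventually_mem_iff x
  have hmem := (h.add_mem_iff _).1 <| hiff.1 <| A.add_mem h.mem_cone (A.smul_mem hx hε.le)
  exact (PointedCone.smul_mem_iff (C := D.toPointedCone) hε).1 hmem

lemma eq_zero_of_neg_mem (h : IsLocalTangentCone A D z)
    (hz : SpansExtremeRay ((A : Set E) + (C : Set E)) z) (hzC : ∀ c : ℝ, c • z ∈ C → c = 0)
    {x : E} (hx : x ∈ D) (hx' : -x ∈ C) : x = 0 := by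
  obtain ⟨ε, hε, hiff⟩ := exists_pos_add_smul_of_eventually_nhds h.eventually_mem_iff x
  have hA : z + ε • x ∈ A := hiff.2 <| (h.add_mem_iff _).2 <| D.smul_mem hx hε.le
  have hC : ε • -x ∈ C := C.smul_mem hx' hε.le
  obtain ⟨c, hc⟩ := Submodule.mem_span_singleton.1 <|
    hz (ε • -x) ⟨0, A.zero_mem, _, hC, zero_add _⟩ (z + ε • x) ⟨_, hA, 0, C.zero_mem, add_zero _⟩
      (by simp)
  rw [hzC c (hc ▸ hC), zero_smul, eq_comm, smul_neg, neg_eq_zero] at hc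
  exact (smul_eq_zero_iff_right hε.ne').1 hc

variable [MeasurableSpace E] {μ : Measure E}

lemma eventually_convVolume_eq [ProperSpace E] (h : IsLocalTangentCone A D z)
    (hDC : ∀ x ∈ D, -x ∈ C → x = 0) :
    ∀ᶠ x in 𝓝 z, convVolume μ A C x = convVolume μ D C x := by
  obtain ⟨R, -, hR⟩ := exists_norm_le_mul_norm_add hDC
  obtain ⟨ρ, hρ, hball⟩ := Metric.eventually_nhds_iff.1 h.eventually_mem_iff
  have hnear : ∀ᶠ x in 𝓝 z, R * ‖-z + x‖ < ρ :=
    (Continuous.tendsto' (by fun_prop) z 0 (by simp)).eventually_lt_const hρ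
  filter_upwards [hnear] with x hx
  have hmem : ∀ w ∈ D, x - w ∈ C → w ∈ A := by
    intro w hw hxw
    refine (hball ?_).2 hw
    have hbound := hR (-z + w) (D.add_mem h.neg_mem hw) (x - w) hxw
    rw [show -z + w + (x - w) = -z + x by abel] at hbound
    rw [dist_eq_norm, sub_eq_neg_add]
    exact hbound.trans_lt hx
  refine congrArg μ (Set.ext fun w ↦ ⟨fun hw ↦ ⟨h.le hw.1, hw.2⟩, fun hw ↦ ⟨?_, hw.2⟩⟩)
  exact hmem w hw.1 hw.2

lemma convVolume_eq [BorelSpace E] [FiniteDimensional ℝ E] [μ.IsAddHaarMeasure]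
    (h : IsLocalTangentCone A D z) (h' : IsLocalTangentCone A' D z)
    (hDC : ∀ x ∈ D, -x ∈ C → x = 0) (hDC' : ∀ x ∈ D, -x ∈ C' → x = 0)
    (hconv : convVolume μ A C = convVolume μ A' C') : convVolume μ D C = convVolume μ D C' := by
  have := FiniteDimensional.proper ℝ E
  have hnear : ∀ᶠ x in 𝓝 z, convVolume μ D C x = convVolume μ D C' x := by
    filter_upwards [h.eventually_convVolume_eq hDC, h'.eventually_convVolume_eq hDC'] with x hx hx'
    rw [← hx, ← hx', hconv]
  ext x
  obtain ⟨ε, hε, hx⟩ := exists_pos_add_smul_of_eventually_nhds hnear x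
  rw [convVolume_add_left_of_neg_mem h.mem h.neg_mem,
    convVolume_add_left_of_neg_mem h.mem h.neg_mem, convVolume_smul D C hε,
    convVolume_smul D C' hε] at hx
  exact (ENNReal.mul_right_inj (by simp [hε]) ENNReal.ofReal_ne_top).1 hx

end IsLocalTangentCone

end Tangent

section Wedges

open Filter
open scoped Topology RealInnerProductSpace

lemma exists_pair_forall_nonneg {E : Type*} [AddCommGroup E] [Module ℝ E]
    (hE : Module.finrank ℝ E = 3) {ι : Type*} [Finite ι] [Nonempty ι] {φ : ι → Module.Dual ℝ E}
    {z e : E} (hz0 : z ≠ 0) (hz : ∀ i, φ i z = 0) (he : ∀ i, 0 < φ i e) :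
    ∃ m M : ι, ∀ x, 0 ≤ φ m x → 0 ≤ φ M x → ∀ i, 0 ≤ φ i x := by
  have hpair : LinearIndependent ℝ ![z, e] := by
    refine LinearIndependent.pair_iff.2 fun s t hst ↦ ?_
    have ht : t = 0 := by
      have i := Classical.arbitrary ι
      simpa [hz i, (he i).ne'] using congrArg (φ i) hst
    simpa [ht, hz0] using hst
  obtain ⟨f, hf⟩ := exists_linearIndependent_cons_of_lt_finrank hpair (by omega)
  have hspan := hf.span_eq_top_of_card_eq_finrank (by simp [hE])
  have coords : ∀ x, ∃ α β γ : ℝ, γ • z + α • e + β • f = x := by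
    intro x
    obtain ⟨c, hc⟩ := (Submodule.mem_span_range_iff_exists_fun ℝ).1
      (hspan ▸ Submodule.mem_top : x ∈ _)
    refine ⟨c 2, c 0, c 1, ?_⟩
    rw [← hc, Fin.sum_univ_three]
    exact (add_rotate ..).symm
  have slope : ∀ i (α β γ : ℝ),
      φ i (γ • z + α • e + β • f) = φ i e * (α + β * (φ i f / φ i e)) := by
    intro i α β γ
    have := (he i).ne'
    simp only [map_add, map_smul, hz, smul_eq_mul]
    field_simp
    ring
  obtain ⟨m, hm⟩ := Finite.exists_min fun i ↦ φ i f / φ i e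
  obtain ⟨M, hM⟩ := Finite.exists_max fun i ↦ φ i f / φ i e
  refine ⟨m, M, fun x hxm hxM i ↦ ?_⟩
  obtain ⟨α, β, γ, rfl⟩ := coords x
  -- Modulo `z`, half-planes through `e` are ordered by slope, so the two extreme slopes decide.
  rw [slope, mul_nonneg_iff_of_pos_left (he _)] at hxm hxM ⊢
  obtain hβ | hβ := le_total 0 β
  · linarith [mul_le_mul_of_nonneg_left (hm i) hβ]
  · linarith [mul_le_mul_of_nonpos_left (hM i) hβ]

lemma exists_continuousLinearEquiv_of_inf_ker_le {E : Type*} [NormedAddCommGroup E]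
    [NormedSpace ℝ E] (hE : Module.finrank ℝ E = 3) {φ ψ : Module.Dual ℝ E} {z : E} (hz0 : z ≠ 0)
    (hφ : φ z = 0) (hψ : ψ z = 0)
    (hker : ∀ x, φ x = 0 → ψ x = 0 → x ∈ Submodule.span ℝ {z}) :
    ∃ T : ((ℝ × ℝ) × ℝ) ≃L[ℝ] E, T (0, 1) = z ∧ ∀ x, (T.symm x).1 = (φ x, ψ x) := by
  have : FiniteDimensional ℝ E := .of_finrank_pos (by omega)
  obtain ⟨χ, hχ⟩ := SeparatingDual.exists_eq_one (R := ℝ) hz0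
  have hinj : Function.Injective ((φ.prod ψ).prod (χ : Module.Dual ℝ E)) := by
    refine (injective_iff_map_eq_zero _).2 fun x hx ↦ ?_
    obtain ⟨⟨hφx, hψx⟩, hχx⟩ : (φ x = 0 ∧ ψ x = 0) ∧ χ x = 0 := by simpa using hx
    obtain ⟨c, rfl⟩ := Submodule.mem_span_singleton.1 (hker x hφx hψx)
    obtain rfl : c = 0 := by simpa [hχ] using hχx
    exact zero_smul ℝ z
  let T := (LinearMap.linearEquivOfInjective _ hinj (by simp [hE])).toContinuousLinearEquiv
  exact ⟨T.symm, T.symm_apply_eq.2 (Prod.ext (Prod.ext hφ.symm hψ.symm) hχ.symm), fun x ↦ rfl⟩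

/-- The image under `T` of the product of the closed quadrant and a line: a wedge whose edge is the
line spanned by `T (0, 1)`. -/
def quadrantWedge {E : Type*} [NormedAddCommGroup E] [NormedSpace ℝ E]
    (T : ((ℝ × ℝ) × ℝ) ≃L[ℝ] E) : ProperCone ℝ E :=
  (ProperCone.positive ℝ (ℝ × ℝ)).comap
    ((ContinuousLinearMap.fst ℝ (ℝ × ℝ) ℝ).comp (T.symm : E →L[ℝ] (ℝ × ℝ) × ℝ))

lemma mem_quadrantWedge {E : Type*} [NormedAddCommGroup E] [NormedSpace ℝ E]
    {T : ((ℝ × ℝ) × ℝ) ≃L[ℝ] E} {x : E} : x ∈ quadrantWedge T ↔ 0 ≤ (T.symm x).1 :=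
  .rfl

lemma IsLocalTangentCone.mem_span_of_neg_mem {E : Type*} [NormedAddCommGroup E] [NormedSpace ℝ E]
    {A D : ProperCone ℝ E} {z : E} (h : IsLocalTangentCone A D z) (hz : SpansExtremeRay A z) {x : E}
    (hx : x ∈ D) (hx' : -x ∈ D) : x ∈ Submodule.span ℝ {z} := by
  have hreflect : Tendsto (fun y ↦ (2 : ℝ) • z - y) (𝓝 z) (𝓝 z) :=
    Continuous.tendsto' (by fun_prop) _ _ (by simp [two_smul])
  obtain ⟨ε, hε, hadd, hsub⟩ := exists_pos_add_smul_of_eventually_nhds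
    (h.eventually_mem_iff.and (hreflect.eventually h.eventually_mem_iff)) x
  have hadd : z + ε • x ∈ A := hadd.2 <| (h.add_mem_iff _).2 <| D.smul_mem hx hε.le
  have hsub : z + ε • -x ∈ A := by
    rw [show (2 : ℝ) • z - (z + ε • x) = z + ε • -x by module] at hsub
    exact hsub.2 <| (h.add_mem_iff _).2 <| D.smul_mem hx' hε.le
  have hmid := hz _ (A.smul_mem hadd (by positivity : (0 : ℝ) ≤ 2⁻¹)) _
    (A.smul_mem hsub (by positivity : (0 : ℝ) ≤ 2⁻¹)) (by module)
  have hx_eq : ε • x = (2 : ℝ) • (2⁻¹ : ℝ) • (z + ε • x) - z := by module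
  refine (Submodule.smul_mem_iff _ hε.ne').1 (hx_eq ▸ ?_)
  exact Submodule.sub_mem _ (Submodule.smul_mem _ _ hmid) (Submodule.mem_span_singleton_self z)

variable {E : Type*} [NormedAddCommGroup E] [InnerProductSpace ℝ E] [CompleteSpace E] {S : Set E}
  {z e : E}

lemma inner_pos_of_mem_interior_innerDual (he : e ∈ interior (ProperCone.innerDual S : Set E))
    {s : E} (hs : s ∈ S) (hs0 : s ≠ 0) : 0 < ⟪s, e⟫ := by
  obtain ⟨ε, hε, hmem⟩ :=
    exists_pos_add_smul_of_eventually_nhds (mem_interior_iff_mem_nhds.1 he) (-s)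
  have hnonneg : 0 ≤ ⟪s, e + ε • -s⟫ := hmem hs
  rw [inner_add_right, inner_smul_right, inner_neg_right, real_inner_self_eq_norm_sq] at hnonneg
  have : 0 < ε * ‖s‖ ^ 2 := by positivity
  linarith

lemma isLocalTangentCone_innerDual (hS : S.Finite) (hz : z ∈ ProperCone.innerDual S) :
    IsLocalTangentCone (ProperCone.innerDual S) (ProperCone.innerDual {s ∈ S | ⟪s, z⟫ = 0}) z where
  mem s hs := hs.2.ge
  neg_mem s hs := by simp [hs.2]
  eventually_mem_iff := by
    have hinactive : ∀ᶠ x in 𝓝 z, ∀ s ∈ S, ⟪s, z⟫ ≠ 0 → 0 < ⟪s, x⟫ := by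
      refine (eventually_all_finite hS).2 fun s hs ↦ eventually_imp_distrib_left.2 fun hsz ↦ ?_
      have hcont : Continuous fun x : E ↦ ⟪s, x⟫ := by fun_prop
      exact (hcont.tendsto z).eventually_const_lt ((hz hs).lt_of_ne' hsz)
    filter_upwards [hinactive] with x hx
    refine ⟨fun hxS s hs ↦ hxS hs.1, fun hxS s hs ↦ ?_⟩
    by_cases hsz : ⟪s, z⟫ = 0
    · exact hxS ⟨hs, hsz⟩
    · exact (hx s hs hsz).le

lemma exists_isLocalTangentCone_quadrantWedge (hE : Module.finrank ℝ E = 3) (hS : S.Finite)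
    (hS0 : 0 ∉ S) (hint : (interior (ProperCone.innerDual S : Set E)).Nonempty) (hz0 : z ≠ 0)
    (hz : z ∈ ProperCone.innerDual S) (hext : SpansExtremeRay (ProperCone.innerDual S : Set E) z) :
    ∃ T : ((ℝ × ℝ) × ℝ) ≃L[ℝ] E,
      T (0, 1) = z ∧ IsLocalTangentCone (ProperCone.innerDual S) (quadrantWedge T) z := by
  obtain ⟨e, he⟩ := hint
  have htangent := isLocalTangentCone_innerDual hS hz
  set S₀ := {s ∈ S | ⟪s, z⟫ = 0}
  have hlineality : ∀ x, (∀ s ∈ S₀, ⟪s, x⟫ = 0) → x ∈ Submodule.span ℝ {z} := fun x hx ↦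
    htangent.mem_span_of_neg_mem hext (fun s hs ↦ (hx s hs).ge) fun s hs ↦ by simp [hx s hs]
  have hne : S₀.Nonempty := by
    by_contra! hempty
    have htop : Submodule.span ℝ {z} = ⊤ := eq_top_iff.2 fun x _ ↦ hlineality x (by simp [hempty])
    have := finrank_span_singleton (K := ℝ) hz0
    rw [htop, finrank_top, hE] at this
    omega
  have := hne.to_subtype
  have := (hS.subset (Set.sep_subset _ _) : S₀.Finite).to_subtype
  obtain ⟨m, M, hmM⟩ := exists_pair_forall_nonneg hE (φ := fun s : S₀ ↦ innerₗ E s.1) hz0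
    (fun s ↦ s.2.2) fun s ↦ inner_pos_of_mem_interior_innerDual he s.2.1 fun h0 ↦ hS0 (h0 ▸ s.2.1)
  have hker : ∀ x, ⟪m.1, x⟫ = 0 → ⟪M.1, x⟫ = 0 → x ∈ Submodule.span ℝ {z} := by
    refine fun x hm hM ↦ hlineality x fun s hs ↦ le_antisymm ?_ (hmM x hm.ge hM.ge ⟨s, hs⟩)
    simpa using hmM (-x) (by simp [hm]) (by simp [hM]) ⟨s, hs⟩
  obtain ⟨T, hTz, hT⟩ := exists_continuousLinearEquiv_of_inf_ker_le hE (φ := innerₗ E m.1)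
    (ψ := innerₗ E M.1) hz0 m.2.2 M.2.2 hker
  have hwedge : quadrantWedge T = ProperCone.innerDual S₀ := by
    ext x
    rw [mem_quadrantWedge, hT]
    exact ⟨fun hx s hs ↦ hmM x hx.1 hx.2 ⟨s, hs⟩, fun hx ↦ ⟨hx m.2, hx M.2⟩⟩
  exact ⟨T, hTz, hwedge ▸ htangent⟩

end Wedges

section Slices

open Filter
open scoped ENNReal Topology

lemma ext_of_Iic_prod {μ ν : Measure (ℝ × ℝ)} (hμ : ∀ q, μ (Set.Iic q) ≠ ∞)
    (h : ∀ q, μ (Set.Iic q) = ν (Set.Iic q)) : μ = ν := by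
  have hspan : IsCountablySpanning (Set.range (Set.Iic : ℝ → Set ℝ)) :=
    ⟨fun n : ℕ ↦ Set.Iic (n : ℝ), fun n ↦ ⟨_, rfl⟩,
      Set.iUnion_eq_univ_iff.2 fun x ↦ exists_nat_ge x⟩
  refine Measure.ext_of_generateFrom_of_iUnion
    (Set.image2 (· ×ˢ ·) (Set.range (Set.Iic : ℝ → Set ℝ)) (Set.range (Set.Iic : ℝ → Set ℝ)))
    (fun n : ℕ ↦ Set.Iic ((n : ℝ), (n : ℝ))) ?_ (isPiSystem_Iic.prod isPiSystem_Iic) ?_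
    (fun n ↦ ⟨_, ⟨n, rfl⟩, _, ⟨n, rfl⟩, (Set.Iic_prod_eq ((n : ℝ), (n : ℝ))).symm⟩)
    (fun n ↦ hμ _) ?_
  · rw [← generateFrom_prod_eq hspan hspan, ← borel_eq_generateFrom_Iic,
      ← BorelSpace.measurable_eq (α := ℝ)]
  · refine Set.iUnion_eq_univ_iff.2 fun x ↦ ?_
    obtain ⟨n, hn⟩ := exists_nat_ge (max x.1 x.2)
    exact ⟨n, (le_max_left _ _).trans hn, (le_max_right _ _).trans hn⟩
  · rintro _ ⟨_, ⟨a, rfl⟩, _, ⟨b, rfl⟩, rfl⟩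
    simpa only [← Set.Iic_prod_eq (a, b)] using h (a, b)

lemma map_fst_restrict_prod {X Y : Type*} [MeasurableSpace X] [MeasurableSpace Y] (μ : Measure X)
    (ν : Measure Y) [SFinite ν] {K : Set (X × Y)} (hK : MeasurableSet K) :
    ((μ.prod ν).restrict K).map Prod.fst = μ.withDensity fun x ↦ ν (Prod.mk x ⁻¹' K) := by
  ext s hs
  rw [Measure.map_apply measurable_fst hs, Measure.restrict_apply (measurable_fst hs),
    withDensity_apply _ hs, Measure.prod_apply ((measurable_fst hs).inter hK),
    ← lintegral_indicator hs]
  congr 1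
  ext x
  by_cases hx : x ∈ s <;> simp [hx, Set.preimage_preimage]

lemma measure_slice_ae_eq {Y : Type*} [MeasurableSpace Y] {μ : Measure (ℝ × ℝ)} [SigmaFinite μ]
    {ν : Measure Y} [SFinite ν] {K L : Set ((ℝ × ℝ) × Y)} (hK : MeasurableSet K)
    (hL : MeasurableSet L) (hfin : ∀ q, μ.prod ν (K ∩ Prod.fst ⁻¹' Set.Iic q) ≠ ∞)
    (h : ∀ q, μ.prod ν (K ∩ Prod.fst ⁻¹' Set.Iic q) = μ.prod ν (L ∩ Prod.fst ⁻¹' Set.Iic q)) :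
    (fun q ↦ ν (Prod.mk q ⁻¹' K)) =ᵐ[μ] fun q ↦ ν (Prod.mk q ⁻¹' L) := by
  have hIic : ∀ (M : Set ((ℝ × ℝ) × Y)) (q : ℝ × ℝ),
      ((μ.prod ν).restrict M).map Prod.fst (Set.Iic q) =
        μ.prod ν (M ∩ Prod.fst ⁻¹' Set.Iic q) := fun M q ↦ by
    rw [Measure.map_apply measurable_fst measurableSet_Iic,
      Measure.restrict_apply (measurable_fst measurableSet_Iic), Set.inter_comm]
  have hmarginal : ((μ.prod ν).restrict K).map Prod.fst = ((μ.prod ν).restrict L).map Prod.fst :=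
    ext_of_Iic_prod (fun q ↦ (hIic K q).trans_ne (hfin q)) fun q ↦ by rw [hIic, hIic, h]
  rw [map_fst_restrict_prod μ ν hK, map_fst_restrict_prod μ ν hL] at hmarginal
  exact (withDensity_eq_iff_of_sigmaFinite (measurable_measure_prodMk_left hK).aemeasurable
    (measurable_measure_prodMk_left hL).aemeasurable).1 hmarginal

lemma upperSemicontinuousAt_measure_slice {X Y : Type*} [TopologicalSpace X] [TopologicalSpace Y]
    [MeasurableSpace Y] {ν : Measure Y} [ν.OuterRegular] {L : Set (X × Y)} (hL : IsClosed L)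
    {k : Set Y} (hk : IsCompact k) {a : X} (hLk : ∀ᶠ x in 𝓝 a, Prod.mk x ⁻¹' L ⊆ k) :
    UpperSemicontinuousAt (fun x ↦ ν (Prod.mk x ⁻¹' L)) a := by
  intro r hr
  obtain ⟨U, haU, hU, hUr⟩ := Set.exists_isOpen_lt_of_lt _ r hr
  have hout : ∀ᶠ x in 𝓝 a, ∀ y ∈ k \ U, (x, y) ∉ L := by
    refine (hk.diff hU).eventually_forall_of_forall_eventually fun y hy ↦ ?_
    exact hL.isOpen_compl.eventually_mem fun hmem ↦ hy.2 (haU hmem)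
  filter_upwards [hLk, hout] with x hxk hx
  refine (measure_mono fun y hy ↦ ?_).trans_lt hUr
  by_contra hyU
  exact hx y ⟨hxk hy, hyU⟩ hy

section Cones

variable {X Y : Type*} [NormedAddCommGroup X] [NormedSpace ℝ X] [NormedAddCommGroup Y]
  [NormedSpace ℝ Y] [MeasurableSpace Y] {ν : Measure Y} {K L : ProperCone ℝ (X × Y)}

lemma measure_slice_le_of_mem [BorelSpace Y] [ν.IsAddLeftInvariant] {p : X × Y} (hp : p ∈ K)
    (v : X) : ν (Prod.mk v ⁻¹' K) ≤ ν (Prod.mk (v + p.1) ⁻¹' K) := by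
  rw [← measure_preimage_add ν p.2 (Prod.mk (v + p.1) ⁻¹' K)]
  refine measure_mono fun y hy ↦ ?_
  have := K.add_mem hp hy
  rwa [Prod.add_def, add_comm p.1] at this

lemma upperSemicontinuous_measure_slice [ProperSpace X] [ProperSpace Y] [ν.OuterRegular]
    (hL : ∀ y, ((0, y) : X × Y) ∈ L → y = 0) :
    UpperSemicontinuous fun v ↦ ν (Prod.mk v ⁻¹' (L : Set (X × Y))) := by
  intro v
  have hvertical : ∀ p ∈ L, -p ∈ (⊥ : ProperCone ℝ X).comap (.fst ℝ X Y) → p = 0 := by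
    rintro ⟨x, y⟩ hp hx
    obtain rfl : x = 0 := by simpa using hx
    simp [hL y hp]
  obtain ⟨R, hR0, hR⟩ := exists_norm_le_mul_norm_add hvertical
  refine upperSemicontinuousAt_measure_slice L.isClosed
    (isCompact_closedBall (0 : Y) (R * (‖v‖ + 1))) ?_
  filter_upwards [(continuous_norm.tendsto v).eventually_lt_const (lt_add_one _)] with w hw y hy
  have hbound : ‖(w, y)‖ ≤ R * ‖w‖ := by simpa using hR (w, y) hy (0, -y) (by simp)
  rw [mem_closedBall_zero_iff]
  calc ‖y‖ ≤ ‖(w, y)‖ := norm_snd_le (w, y)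
    _ ≤ R * ‖w‖ := hbound
    _ ≤ R * (‖v‖ + 1) := by gcongr

lemma measure_slice_le_of_ae_le [ProperSpace X] [ProperSpace Y] [MeasurableSpace X]
    {μ : Measure X} [μ.IsOpenPosMeasure] [BorelSpace Y] [ν.OuterRegular] [ν.IsAddLeftInvariant]
    (hK : (interior (K : Set (X × Y))).Nonempty) (hL : ∀ y, ((0, y) : X × Y) ∈ L → y = 0)
    (hae : ∀ᵐ v ∂μ, ν (Prod.mk v ⁻¹' K) ≤ ν (Prod.mk v ⁻¹' L)) (v : X) :
    ν (Prod.mk v ⁻¹' K) ≤ ν (Prod.mk v ⁻¹' L) := by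
  -- Points `w` of `v + fst (interior K)` satisfying the inequality accumulate at `v`. Moving to
  -- such a `w` does not decrease the slice of `K`; semicontinuity controls the slice of `L`.
  by_contra! hlt
  obtain ⟨O, hO, hOopen, hvO⟩ :=
    eventually_nhds_iff.1 (upperSemicontinuous_measure_slice hL v _ hlt)
  have hshift : IsOpen ((v + ·) '' (Prod.fst '' interior (K : Set (X × Y)))) :=
    isOpenMap_add_left v _ (isOpenMap_fst _ isOpen_interior)
  have hmeet : (O ∩ (v + ·) '' (Prod.fst '' interior (K : Set (X × Y)))).Nonempty := by
    have h0 : (0 : X × Y) ∈ closure (interior (K : Set (X × Y))) :=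
      K.convex.closure_interior_eq_closure_of_nonempty_interior hK ▸ subset_closure K.zero_mem
    have hnear : {p : X × Y | v + p.1 ∈ O} ∈ 𝓝 0 :=
      (hOopen.preimage (by fun_prop)).mem_nhds (by simpa using hvO)
    obtain ⟨p, hpO, hpK⟩ := mem_closure_iff_nhds.1 h0 _ hnear
    exact ⟨_, hpO, _, ⟨p, hpK, rfl⟩, rfl⟩
  obtain ⟨_, ⟨hwO, _, ⟨p, hp, rfl⟩, rfl⟩, hw⟩ :=
    (Measure.dense_of_ae hae).inter_open_nonempty _ (hOopen.inter hshift) hmeet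
  exact (hO _ hwO).not_ge ((measure_slice_le_of_mem (interior_subset hp) v).trans hw)

end Cones

end Slices

section WedgeConvolution

open scoped ENNReal NNReal

lemma isAddHaarMeasure_volume_prod_volume_prod_volume :
    ((volume : Measure (ℝ × ℝ)).prod (volume : Measure ℝ)).IsAddHaarMeasure := by
  have : (volume : Measure (ℝ × ℝ)).IsAddHaarMeasure :=
    inferInstanceAs ((volume : Measure ℝ).prod (volume : Measure ℝ)).IsAddHaarMeasure
  infer_instance

lemma exists_measure_eq_mul_measure_preimage {E F : Type*} [NormedAddCommGroup E]
    [NormedSpace ℝ E] [FiniteDimensional ℝ E] [MeasurableSpace E] [BorelSpace E]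
    [NormedAddCommGroup F] [NormedSpace ℝ F] [MeasurableSpace F] [BorelSpace F]
    (T : F ≃L[ℝ] E) (μ : Measure E) [μ.IsAddHaarMeasure] (ν : Measure F) [ν.IsAddHaarMeasure] :
    ∃ c : ℝ≥0, c ≠ 0 ∧ ∀ s, μ s = c * ν (T ⁻¹' s) := by
  have : (ν.map T).IsAddHaarMeasure := T.isAddHaarMeasure_map ν
  refine ⟨Measure.addHaarScalarFactor μ (ν.map T), ?_, fun s ↦ ?_⟩
  · exact (Measure.addHaarScalarFactor_pos_of_isAddHaarMeasure μ (ν.map T)).ne'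
  · have hmap : ν.map T s = ν (T ⁻¹' s) := T.toHomeomorph.toMeasurableEquiv.map_apply s
    conv_lhs => rw [Measure.isAddLeftInvariant_eq_smul μ (ν.map T)]
    rw [Measure.smul_apply, hmap]
    rfl

variable {E : Type*} [NormedAddCommGroup E] [NormedSpace ℝ E] [MeasurableSpace E] [BorelSpace E]
  {μ : Measure E} [μ.IsAddHaarMeasure] {T : ((ℝ × ℝ) × ℝ) ≃L[ℝ] E} {C C' : ProperCone ℝ E}

lemma measure_slice_preimage_le [FiniteDimensional ℝ E] (hC : (interior (C : Set E)).Nonempty)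
    (hDC : ∀ x ∈ quadrantWedge T, -x ∈ C → x = 0) (hDC' : ∀ x ∈ quadrantWedge T, -x ∈ C' → x = 0)
    (h : convVolume μ (quadrantWedge T) C = convVolume μ (quadrantWedge T) C') (q : ℝ × ℝ) :
    volume {t : ℝ | T (q, t) ∈ C} ≤ volume {t : ℝ | T (q, t) ∈ C'} := by
  have := isAddHaarMeasure_volume_prod_volume_prod_volume
  obtain ⟨c, hc, hμ⟩ := exists_measure_eq_mul_measure_preimage T μ
    ((volume : Measure (ℝ × ℝ)).prod (volume : Measure ℝ))
  let pull (M : ProperCone ℝ E) : ProperCone ℝ ((ℝ × ℝ) × ℝ) := M.comap (T : _ →L[ℝ] E)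
  have hconv : ∀ (M : ProperCone ℝ E) (q : ℝ × ℝ), convVolume μ (quadrantWedge T) M (T (q, 0)) =
      c * (volume.prod volume) ((pull M : Set ((ℝ × ℝ) × ℝ)) ∩ Prod.fst ⁻¹' Set.Iic q) := by
    intro M q
    rw [convVolume_comm μ (quadrantWedge T).isClosed.measurableSet M.isClosed.measurableSet,
      convVolume, hμ]
    congr 2
    ext p
    simp [mem_quadrantWedge, pull]
  have hae : (fun q ↦ volume (Prod.mk q ⁻¹' (pull C : Set ((ℝ × ℝ) × ℝ)))) =ᵐ[volume]
      fun q ↦ volume (Prod.mk q ⁻¹' (pull C' : Set ((ℝ × ℝ) × ℝ))) :=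
    measure_slice_ae_eq (pull C).isClosed.measurableSet (pull C').isClosed.measurableSet
      (fun q hq ↦ convVolume_ne_top (μ := μ) hDC (T (q, 0)) (by simp [hconv, hq, hc])) fun q ↦ by
        have := congrFun h (T (q, 0))
        rwa [hconv, hconv, ENNReal.mul_right_inj (by simpa) (by simp)] at this
  have hint : (interior (pull C : Set ((ℝ × ℝ) × ℝ))).Nonempty := by
    have hpre : T ⁻¹' interior (C : Set E) = interior (T ⁻¹' C) :=
      T.toHomeomorph.preimage_interior C
    exact hpre ▸ hC.preimage T.surjective
  have hvert : ∀ t : ℝ, ((0, t) : (ℝ × ℝ) × ℝ) ∈ pull C' → t = 0 := fun t ht ↦ by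
    have := hDC' (T (0, -t)) (by simp [mem_quadrantWedge]) (by simpa [← map_neg, pull] using ht)
    simpa using this
  exact measure_slice_le_of_ae_le hint hvert hae.le q

lemma volume_add_smul_mem_eq [FiniteDimensional ℝ E] (hC : (interior (C : Set E)).Nonempty)
    (hC' : (interior (C' : Set E)).Nonempty) (hDC : ∀ x ∈ quadrantWedge T, -x ∈ C → x = 0)
    (hDC' : ∀ x ∈ quadrantWedge T, -x ∈ C' → x = 0)
    (h : convVolume μ (quadrantWedge T) C = convVolume μ (quadrantWedge T) C') (x : E) :
    volume {t : ℝ | x + t • T (0, 1) ∈ C} = volume {t : ℝ | x + t • T (0, 1) ∈ C'} := by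
  have hslice : ∀ M : ProperCone ℝ E, volume {t : ℝ | x + t • T (0, 1) ∈ M} =
      volume {t : ℝ | T ((T.symm x).1, t) ∈ M} := by
    intro M
    rw [← measure_preimage_add volume (T.symm x).2 {t | T ((T.symm x).1, t) ∈ M}]
    congr 1
    ext t
    have hx : x + t • T (0, 1) = T ((T.symm x).1, (T.symm x).2 + t) := by
      apply T.symm.injective
      ext <;> simp
    change x + t • T (0, 1) ∈ M ↔ _ ∈ M
    rw [hx]
  rw [hslice, hslice]
  exact (measure_slice_preimage_le hC hDC hDC' h _).antisymm
    (measure_slice_preimage_le hC' hDC' hDC h.symm _)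

end WedgeConvolution

section Chord

lemma setIntegral_inv_abs_sq {S : Set ℝ} (hS : MeasurableSet S) (hS0 : (0 : ℝ) ∉ S) :
    ∫ t in S, |t|⁻¹ ^ 2 = volume.real S⁻¹ := by
  have hne : ∀ s ∈ S⁻¹, s ≠ 0 := by
    rintro _ hs rfl
    exact hS0 (by simpa using hs)
  have hjac : ∀ s ∈ S⁻¹, |-(s ^ 2)⁻¹| • |s⁻¹|⁻¹ ^ 2 = (1 : ℝ) := fun s hs ↦ by
    have := hne s hs
    simp [abs_inv, this]
  calc ∫ t in S, |t|⁻¹ ^ 2 = ∫ t in Inv.inv '' S⁻¹, |t|⁻¹ ^ 2 := by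
        rw [Set.image_inv_eq_inv, inv_inv]
    _ = ∫ s in S⁻¹, |-(s ^ 2)⁻¹| • |s⁻¹|⁻¹ ^ 2 :=
      integral_image_eq_integral_abs_deriv_smul hS.inv
        (fun s hs ↦ (hasDerivAt_inv (hne s hs)).hasDerivWithinAt) inv_injective.injOn _
    _ = volume.real S⁻¹ := by
      rw [setIntegral_congr_fun hS.inv hjac]
      simp

lemma volume_inv_setOf_add_smul_mem {E : Type*} [NormedAddCommGroup E] [NormedSpace ℝ E]
    {C : ProperCone ℝ E} {ℓ : E →ₗ[ℝ] ℝ} (hC : ∀ x ∈ C, x ≠ 0 → 0 < ℓ x) {z u : E}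
    (hz : 0 < ℓ z) (hzC : z ∉ C) (hu : ℓ u = 0) (hu0 : u ≠ 0) :
    volume {t : ℝ | z + t • u ∈ C}⁻¹ =
      volume {s : ℝ | u + s • z ∈ C} + volume {s : ℝ | -u + s • z ∈ C} := by
  have hpos : ∀ v : E, ℓ v = 0 → v ≠ 0 → ∀ s : ℝ, v + s • z ∈ C → 0 < s := by
    intro v hv hv0 s hs
    have hne : v + s • z ≠ 0 := fun h ↦ by
      have hs0 : s = 0 := by simpa [hv, hz.ne'] using congrArg ℓ h
      exact hv0 (by simpa [hs0] using h)
    have := hC _ hs hne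
    simp only [map_add, hv, map_smul, smul_eq_mul, zero_add] at this
    exact pos_of_mul_pos_left this hz.le
  have hpos_neg := hpos (-u) (by simp [hu]) (by simpa)
  have hscale : ∀ {r : ℝ} (v : E), 0 < r → (r⁻¹ • (v + r • z) ∈ C ↔ v + r • z ∈ C) := fun v hr ↦
    PointedCone.smul_mem_iff (C := C.toPointedCone) (inv_pos.2 hr)
  have hset : {t : ℝ | z + t • u ∈ C}⁻¹ =
      {s : ℝ | u + s • z ∈ C} ∪ -{s : ℝ | -u + s • z ∈ C} := by
    ext s
    simp only [Set.mem_inv, Set.mem_ofPred_eq, Set.mem_union, Set.mem_neg]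
    obtain hs | rfl | hs := lt_trichotomy s 0
    · have hs' : 0 < -s := neg_pos.2 hs
      rw [or_iff_right fun h ↦ hs.not_gt (hpos u hu hu0 s h), ← hscale (-u) hs']
      congr! 1
      rw [smul_add, inv_smul_smul₀ hs'.ne', add_comm, inv_neg, neg_smul_neg]
    · simpa [hzC] using ⟨fun h ↦ (hpos u hu hu0 0 (by simpa)).false,
        fun h ↦ (hpos_neg 0 (by simpa)).false⟩
    · rw [or_iff_left fun h ↦ hs.not_gt (neg_pos.1 (hpos_neg _ h)), ← hscale u hs]
      congr! 1
      rw [smul_add, inv_smul_smul₀ hs.ne', add_comm]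
  have hdisj : Disjoint {s : ℝ | u + s • z ∈ C} (-{s : ℝ | -u + s • z ∈ C}) :=
    Set.disjoint_left.2 fun s h h' ↦ (hpos u hu hu0 s h).not_gt (neg_pos.1 (hpos_neg _ h'))
  have hmeas : MeasurableSet {s : ℝ | -u + s • z ∈ C} :=
    (C.isClosed.preimage (by fun_prop : Continuous fun s : ℝ ↦ -u + s • z)).measurableSet
  rw [hset, measure_union hdisj hmeas.neg, Measure.measure_neg]

end Chord

section Vertex

open Filter
open scoped Topology

local notation "ℝ³" => EuclideanSpace ℝ (Fin 3)

variable {A C A' C' K L : ProperCone ℝ ℝ³} {z u : ℝ³}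

lemma nonempty_interior_neg {X : Type*} [TopologicalSpace X] [InvolutiveNeg X] [ContinuousNeg X]
    {s : Set X} (hs : (interior s).Nonempty) : (interior (-s)).Nonempty := by
  have hneg : -interior s = interior (-s) := (Homeomorph.neg _).preimage_interior s
  exact hneg ▸ hs.neg

lemma IsPolyhedralCone.neg {s : Set ℝ³} (hs : IsPolyhedralCone s) :
    IsPolyhedralCone (-s) := by
  classical
  obtain ⟨S, rfl⟩ := hs
  exact ⟨S.image (-·), Set.ext fun x ↦ by simp⟩

lemma IsPolyhedralCone.exists_innerDual {s : Set ℝ³}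
    (hs : IsPolyhedralCone s) : ∃ S : Set ℝ³,
      S.Finite ∧ 0 ∉ S ∧ (ProperCone.innerDual S : Set ℝ³) = s := by
  obtain ⟨S, rfl⟩ := hs
  refine ⟨-(S : Set ℝ³) \ {0}, S.finite_toSet.neg.sdiff, by simp,
    Set.ext fun x ↦ ⟨fun h s hs ↦ ?_, fun h s hs ↦ ?_⟩⟩
  · obtain rfl | hs0 := eq_or_ne s 0
    · simp
    · simpa using ProperCone.mem_innerDual.1 h (x := -s) ⟨by simpa using hs, by simpa⟩
  · simpa using h (-s) hs.1

lemma IsPolyhedralCone.exists_properCone {s : Set ℝ³} (hs : IsPolyhedralCone s) :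
    ∃ K : ProperCone ℝ ℝ³, (K : Set ℝ³) = s :=
  have ⟨_, _, _, hS⟩ := hs.exists_innerDual
  ⟨_, hS⟩

/-- A full-dimensional closed convex cone which, apart from its apex, lies in the open half-space
`x₃ > 0`: the position of the cones `A` and `-B`. -/
structure IsUpright (K : ProperCone ℝ ℝ³) : Prop where
  nonempty_interior : (interior (K : Set ℝ³)).Nonempty
  pos : ∀ x ∈ K, x ≠ 0 → 0 < x 2

namespace IsUpright

lemma of_inter_eq (hint : (interior (K : Set ℝ³)).Nonempty)
    (hup : (K : Set ℝ³) ⊆ {x | 0 ≤ x 2})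
    (h0 : (K : Set ℝ³) ∩ {x | x 2 = 0} = {0}) : IsUpright K :=
  ⟨hint, fun _ hx hx0 ↦ (hup hx).lt_of_ne fun h ↦ hx0 <| h0.subset ⟨hx, h.symm⟩⟩

lemma of_coe_eq_neg {s : Set ℝ³} (hK : (K : Set ℝ³) = -s) (hint : (interior s).Nonempty)
    (hdown : -s ⊆ {x | 0 ≤ x 2}) (h0 : s ∩ {x | x 2 = 0} = {0}) : IsUpright K := by
  refine of_inter_eq (hK ▸ nonempty_interior_neg hint) (hK ▸ hdown) ?_
  have hneg : -(s ∩ {x : ℝ³ | x 2 = 0}) = -s ∩ {x | x 2 = 0} := by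
    ext x
    simp
  rw [hK, ← hneg, h0, Set.neg_singleton, neg_zero]

lemma eq_zero_of_neg_mem (hK : IsUpright K) (hL : IsUpright L) :
    ∀ x ∈ K, -x ∈ L → x = 0 := by
  intro x hx hx'
  by_contra hx0
  have := hL.pos _ hx' (neg_ne_zero.2 hx0)
  exact (hK.pos x hx hx0).not_gt (by simpa using this)

lemma eq_zero_of_smul_mem (hK : IsUpright K) (hz : z 2 = 1) (hzK : z ∉ K) {c : ℝ}
    (hc : c • z ∈ K) : c = 0 := by
  by_contra hc0
  have hz0 : z ≠ 0 := fun h ↦ hzK (h ▸ K.zero_mem)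
  have hpos : 0 < c := by simpa [hz] using hK.pos _ hc (smul_ne_zero hc0 hz0)
  exact hzK <| (PointedCone.smul_mem_iff (C := K.toPointedCone) hpos).1 hc

lemma convVolume_eq_of_crossCovariogram_eq (hA : IsUpright A) (hC : IsUpright C)
    (hA' : IsUpright A') (hC' : IsUpright C')
    (h : crossCovariogram A (-C) = crossCovariogram A' (-C')) :
    convVolume volume (A : Set ℝ³) C = convVolume volume (A' : Set ℝ³) C' := by
  ext x
  have hx := congrFun h x
  rw [crossCovariogram_eq_toReal_convVolume, crossCovariogram_eq_toReal_convVolume, neg_neg,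
    neg_neg] at hx
  exact (ENNReal.toReal_eq_toReal_iff' (convVolume_ne_top (hA.eq_zero_of_neg_mem hC) x)
    (convVolume_ne_top (hA'.eq_zero_of_neg_mem hC') x)).1 hx

lemma chordFunctionNeg₁_eq (hK : IsUpright K) (hz : z 2 = 1) (hzK : z ∉ K) (hu : u ≠ 0) :
    chordFunctionNeg₁ ((K : Set ℝ³) ∩ {x | x 2 = 1}) z u =
      if u 2 = 0 then (volume {s : ℝ | u + s • z ∈ K} + volume {s : ℝ | -u + s • z ∈ K}).toReal
      else 0 := by
  have hset : {t : ℝ | z + t • u ∈ (K : Set ℝ³) ∩ {x | x 2 = 1}} =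
      if u 2 = 0 then {t : ℝ | z + t • u ∈ K} else ∅ := by
    ext t
    split_ifs with hu2
    · simp [hz, hu2]
    · simp only [Set.mem_ofPred_eq, Set.mem_inter_iff, SetLike.mem_coe, PiLp.add_apply, hz,
        PiLp.smul_apply, smul_eq_mul, add_eq_left, mul_eq_zero, hu2, or_false,
        Set.mem_empty_iff_false, iff_false, not_and]
      rintro ht rfl
      exact hzK (by simpa using ht)
  rw [chordFunctionNeg₁, hset]
  split_ifs with hu2
  · have hmeas : MeasurableSet {t : ℝ | z + t • u ∈ K} :=
      (K.isClosed.preimage (by fun_prop : Continuous fun t : ℝ ↦ z + t • u)).measurableSet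
    rw [setIntegral_inv_abs_sq hmeas (by simpa using hzK), Measure.real,
      volume_inv_setOf_add_smul_mem (ℓ := (EuclideanSpace.proj 2 : _ →L[ℝ] ℝ).toLinearMap)
        hK.pos (by simp [hz]) hzK hu2 hu]
  · simp

end IsUpright

lemma eventually_mem_iff_of_inter_eq {U : Set ℝ³} (hz : z 2 = 1)
    (hU : U ∈ 𝓝 z) (h : (K : Set ℝ³) ∩ {x | x 2 = 1} ∩ U =
      (L : Set ℝ³) ∩ {x | x 2 = 1} ∩ U) :
    ∀ᶠ x in 𝓝 z, x ∈ K ↔ x ∈ L := by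
  have hcoord : ContinuousAt (fun x : ℝ³ ↦ x 2) z := by fun_prop
  have hproj : Tendsto (fun x : ℝ³ ↦ (x 2)⁻¹ • x) (𝓝 z) (𝓝 z) := by
    simpa [hz] using (hcoord.tendsto.inv₀ (by simp [hz])).smul tendsto_id
  filter_upwards [hcoord.eventually_const_lt (by simp [hz] : 0 < z 2), hproj hU] with x hx hxU
  have hsection : ∀ M : ProperCone ℝ ℝ³,
      x ∈ M ↔ (x 2)⁻¹ • x ∈ (M : Set ℝ³) ∩ {x | x 2 = 1} ∩ U := fun M ↦ by
    have hscale : (x 2)⁻¹ • x ∈ M ↔ x ∈ M :=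
      PointedCone.smul_mem_iff (C := M.toPointedCone) (inv_pos.2 hx)
    have hxU : (x 2)⁻¹ • x ∈ U := hxU
    simp [hxU, hx.ne', hscale]
  rw [hsection K, hsection L, h]

lemma chordFunctionNeg₁_eq_of_convVolume_eq
    (hpoly : IsPolyhedralCone (A : Set ℝ³)) (hA : IsUpright A)
    (hC : IsUpright C) (hA' : IsUpright A') (hC' : IsUpright C')
    (hconv : convVolume volume (A : Set ℝ³) C = convVolume volume (A' : Set ℝ³) C')
    (hz : z ∈ Set.extremePoints ℝ
      (convexHull ℝ ((A : Set ℝ³) ∩ {x | x 2 = 1} ∪ (C : Set ℝ³) ∩ {x | x 2 = 1})))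
    (hzA : z ∈ A) (hloc : ∀ᶠ x in 𝓝 z, x ∈ A ↔ x ∈ A') (hzC : z ∉ C) (hzC' : z ∉ C')
    (hu : u ≠ 0) :
    chordFunctionNeg₁ ((C : Set ℝ³) ∩ {x | x 2 = 1}) z u =
      chordFunctionNeg₁ ((C' : Set ℝ³) ∩ {x | x 2 = 1}) z u := by
  let ℓ : ℝ³ →ₗ[ℝ] ℝ := (EuclideanSpace.proj 2 : _ →L[ℝ] ℝ).toLinearMap
  have hz2 : z 2 = 1 := eq_one_of_mem_convexHull (ℓ := ℓ) (fun x hx ↦ hx.elim (·.2) (·.2)) hz.1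
  have hz0 : z ≠ 0 := by rintro rfl; simp at hz2
  have hsum : SpansExtremeRay ((A : Set ℝ³) + (C : Set ℝ³)) z :=
    spansExtremeRay_add_of_mem_extremePoints (ℓ := ℓ) hA.pos hC.pos hz
  have hsum' : SpansExtremeRay ((A' : Set ℝ³) + (C' : Set ℝ³)) z :=
    hsum.mono <| add_subset_add_of_convVolume_eq (hA.eq_zero_of_neg_mem hC)
      hA'.nonempty_interior hC'.nonempty_interior hconv
  obtain ⟨S, hS, hS0, hSA⟩ := hpoly.exists_innerDual
  obtain rfl : ProperCone.innerDual S = A := SetLike.coe_injective hSA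
  obtain ⟨T, rfl, hT⟩ := exists_isLocalTangentCone_quadrantWedge (by simp) hS hS0
    hA.nonempty_interior hz0 hzA (hsum.mono fun x hx ↦ ⟨x, hx, 0, C.zero_mem, add_zero x⟩)
  have hT' : IsLocalTangentCone A' (quadrantWedge T) (T (0, 1)) :=
    ⟨hT.mem, hT.neg_mem, hloc.mp <| hT.eventually_mem_iff.mono fun x h h' ↦ h'.symm.trans h⟩
  have hTC : ∀ x ∈ quadrantWedge T, -x ∈ C → x = 0 := fun x ↦
    hT.eq_zero_of_neg_mem hsum fun c ↦ hC.eq_zero_of_smul_mem hz2 hzC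
  have hTC' : ∀ x ∈ quadrantWedge T, -x ∈ C' → x = 0 := fun x ↦
    hT'.eq_zero_of_neg_mem hsum' fun c ↦ hC'.eq_zero_of_smul_mem hz2 hzC'
  have hslice := volume_add_smul_mem_eq hC.nonempty_interior hC'.nonempty_interior hTC hTC'
    (hT.convVolume_eq hT' hTC hTC' hconv)
  rw [hC.chordFunctionNeg₁_eq hz2 hzC hu, hC'.chordFunctionNeg₁_eq hz2 hzC' hu, hslice, hslice]

lemma chordFunctionNeg₁_eq_of_section_eq
    (hpoly : IsPolyhedralCone (A : Set ℝ³)) (hA : IsUpright A)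
    (hC : IsUpright C) (hA' : IsUpright A') (hC' : IsUpright C')
    (hconv : convVolume volume (A : Set ℝ³) C = convVolume volume (A' : Set ℝ³) C')
    {F G F' G' U : Set ℝ³} (hF : F = (A : Set ℝ³) ∩ {x | x 2 = 1})
    (hG : G = (C : Set ℝ³) ∩ {x | x 2 = 1}) (hF' : F' = (A' : Set ℝ³) ∩ {x | x 2 = 1})
    (hG' : G' = (C' : Set ℝ³) ∩ {x | x 2 = 1})
    (hz : z ∈ Set.extremePoints ℝ (convexHull ℝ (F ∪ G))) (hzF : z ∈ F) (hzG : z ∉ G)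
    (hU : U ∈ 𝓝 z) (hloc : (z ∈ F' ∧ F ∩ U = F' ∩ U) ∨ (z ∈ G' ∧ F ∩ U = G' ∩ U))
    {K₂ : Set ℝ³} (hK₂ : K₂ ∈ ({F', G'} : Set (Set ℝ³))) (hzK₂ : z ∉ K₂) (hu : u ≠ 0) :
    chordFunctionNeg₁ G z u = chordFunctionNeg₁ K₂ z u := by
  subst hF hG hF' hG'
  have hz2 : z 2 = 1 := hzF.2
  obtain ⟨hz', heq⟩ | ⟨hz', heq⟩ := hloc
  · obtain rfl := hK₂.resolve_left (hzK₂ <| · ▸ hz')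
    exact chordFunctionNeg₁_eq_of_convVolume_eq hpoly hA hC hA' hC' hconv hz hzF.1
      (eventually_mem_iff_of_inter_eq hz2 hU heq) (hzG ⟨·, hz2⟩) (hzK₂ ⟨·, hz2⟩) hu
  · obtain rfl := hK₂.resolve_right (hzK₂ <| · ▸ hz')
    rw [convVolume_comm volume A'.isClosed.measurableSet C'.isClosed.measurableSet] at hconv
    exact chordFunctionNeg₁_eq_of_convVolume_eq hpoly hA hC hC' hA' hconv hz hzF.1
      (eventually_mem_iff_of_inter_eq hz2 hU heq) (hzG ⟨·, hz2⟩) (hzK₂ ⟨·, hz2⟩) hu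

theorem equal_chord_functions_at_vertices_general {A B : Set ℝ³} {A' B' : ProperCone ℝ ℝ³}
    (hA : IsPolyhedralCone A) (hB : IsPolyhedralCone B)
    (hAint : (interior A).Nonempty) (hBint : (interior B).Nonempty)
    (hA'int : (interior (A' : Set ℝ³)).Nonempty) (hB'int : (interior (B' : Set ℝ³)).Nonempty)
    (hAup : A ⊆ {x | 0 ≤ x 2}) (hBdown : -B ⊆ {x | 0 ≤ x 2})
    (hA'up : (A' : Set ℝ³) ⊆ {x | 0 ≤ x 2}) (hB'down : -(B' : Set ℝ³) ⊆ {x | 0 ≤ x 2})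
    (hA0 : A ∩ {x | x 2 = 0} = {0}) (hB0 : B ∩ {x | x 2 = 0} = {0})
    (hA'0 : (A' : Set ℝ³) ∩ {x | x 2 = 0} = {0}) (hB'0 : (B' : Set ℝ³) ∩ {x | x 2 = 0} = {0})
    (hcov : crossCovariogram A B = crossCovariogram A' B') {F G F' G' : Set ℝ³}
    (hF : F = A ∩ {x | x 2 = 1}) (hG : G = (-B) ∩ {x | x 2 = 1})
    (hF' : F' = (A' : Set ℝ³) ∩ {x | x 2 = 1}) (hG' : G' = (-(B' : Set ℝ³)) ∩ {x | x 2 = 1})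
    (hloc : ∀ z ∈ Set.extremePoints ℝ (convexHull ℝ (F ∪ G)), z ∉ F ∩ G →
      ∃ U ∈ 𝓝 z,
        (z ∈ F → (z ∈ F' ∧ F ∩ U = F' ∩ U) ∨ (z ∈ G' ∧ F ∩ U = G' ∩ U)) ∧
        (z ∈ G → (z ∈ F' ∧ G ∩ U = F' ∩ U) ∨ (z ∈ G' ∧ G ∩ U = G' ∩ U))) :
    ∀ z ∈ Set.extremePoints ℝ (convexHull ℝ (F ∪ G)), z ∉ F ∩ G →
      ∀ K₁ ∈ ({F, G} : Set (Set ℝ³)), ∀ K₂ ∈ ({F', G'} : Set (Set ℝ³)), z ∉ K₁ → z ∉ K₂ →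
        ∀ u : ℝ³, ‖u‖ = 1 → chordFunctionNeg₁ K₁ z u = chordFunctionNeg₁ K₂ z u := by
  intro z hz hzFG K₁ hK₁ K₂ hK₂ hzK₁ hzK₂ u hu
  have hu0 : u ≠ 0 := norm_ne_zero_iff.1 (by simp [hu])
  obtain ⟨U, hU, hUF, hUG⟩ := hloc z hz hzFG
  obtain ⟨A, rfl⟩ := hA.exists_properCone
  obtain ⟨C, hC⟩ := hB.neg.exists_properCone
  obtain ⟨C', hC'⟩ : ∃ C' : ProperCone ℝ ℝ³, (C' : Set ℝ³) = -(B' : Set ℝ³) :=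
    ⟨B'.comap (-.id ℝ ℝ³), rfl⟩
  have upA := IsUpright.of_inter_eq hAint hAup hA0
  have upA' := IsUpright.of_inter_eq hA'int hA'up hA'0
  have upC := IsUpright.of_coe_eq_neg hC hBint hBdown hB0
  have upC' := IsUpright.of_coe_eq_neg hC' hB'int hB'down hB'0
  have hconv := upA.convVolume_eq_of_crossCovariogram_eq upC upA' upC'
    (by rw [hC, hC', neg_neg, neg_neg, hcov])
  rw [← hC] at hG
  rw [← hC'] at hG'
  obtain hzF | hzG := extremePoints_convexHull_subset hz
  · obtain rfl := hK₁.resolve_left (hzK₁ <| · ▸ hzF)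
    exact chordFunctionNeg₁_eq_of_section_eq hA upA upC upA' upC' hconv hF hG hF' hG' hz hzF
      hzK₁ hU (hUF hzF) hK₂ hzK₂ hu0
  · obtain rfl := hK₁.resolve_right (hzK₁ <| · ▸ hzG)
    rw [convVolume_comm volume A.isClosed.measurableSet C.isClosed.measurableSet] at hconv
    rw [Set.union_comm] at hz
    exact chordFunctionNeg₁_eq_of_section_eq (hC ▸ hB.neg) upC upA upA' upC' hconv hG hF hF' hG'
      hz hzG hzK₁ hU (hUG hzG) hK₂ hzK₂ hu0

end Vertex

/-- Under the hypotheses of the cross covariogram problem for cones, at any vertex `z` of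
`H` not in `F ∩ G`, the polygon among `F, G` not containing `z` and the polygon among
`F', G'` not containing `z` have equal `−1`-chord functions at `z`. -/
theorem equal_chord_functions_at_vertices
    (A B A' B' : Set (EuclideanSpace ℝ (Fin 3)))
    (hA : IsPolyhedralCone A) (hB : IsPolyhedralCone B)
    (hA' : IsPolyhedralCone A') (hB' : IsPolyhedralCone B')
    (hAint : (interior A).Nonempty) (hBint : (interior B).Nonempty)
    (hA'int : (interior A').Nonempty) (hB'int : (interior B').Nonempty)
    (hAup : A ⊆ {x | 0 ≤ x 2}) (hBdown : -B ⊆ {x | 0 ≤ x 2})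
    (hA'up : A' ⊆ {x | 0 ≤ x 2}) (hB'down : -B' ⊆ {x | 0 ≤ x 2})
    (hA0 : A ∩ {x | x 2 = 0} = {0}) (hB0 : B ∩ {x | x 2 = 0} = {0})
    (hA'0 : A' ∩ {x | x 2 = 0} = {0}) (hB'0 : B' ∩ {x | x 2 = 0} = {0})
    (hcov : crossCovariogram A B = crossCovariogram A' B')
    (F G F' G' H : Set (EuclideanSpace ℝ (Fin 3)))
    (hF : F = A ∩ {x | x 2 = 1}) (hG : G = (-B) ∩ {x | x 2 = 1})
    (hF' : F' = A' ∩ {x | x 2 = 1}) (hG' : G' = (-B') ∩ {x | x 2 = 1})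
    (hH : H = convexHull ℝ (F ∪ G))
    (h1 : ∀ z ∈ Set.extremePoints ℝ H, (z ∈ F ∩ G ↔ z ∈ F' ∩ G'))
    (h2 : ∀ S, IsEdgeOf H S →
      ((IsEdgeOf F S ∨ IsEdgeOf G S) ↔ (IsEdgeOf F' S ∨ IsEdgeOf G' S)))
    (h3 : ∀ z ∈ Set.extremePoints ℝ H, z ∉ F ∩ G →
      ∃ U ∈ nhds z,
        (z ∈ F → (z ∈ F' ∧ F ∩ U = F' ∩ U) ∨ (z ∈ G' ∧ F ∩ U = G' ∩ U)) ∧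
        (z ∈ G → (z ∈ F' ∧ G ∩ U = F' ∩ U) ∨ (z ∈ G' ∧ G ∩ U = G' ∩ U))) :
    ∀ z ∈ Set.extremePoints ℝ H, z ∉ F ∩ G →
      ∀ K₁ ∈ ({F, G} : Set (Set (EuclideanSpace ℝ (Fin 3)))),
        ∀ K₂ ∈ ({F', G'} : Set (Set (EuclideanSpace ℝ (Fin 3)))),
          z ∉ K₁ → z ∉ K₂ →
          ∀ u : EuclideanSpace ℝ (Fin 3), ‖u‖ = 1 →
            chordFunctionNeg₁ K₁ z u = chordFunctionNeg₁ K₂ z u := by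
  subst hH
  obtain ⟨A', rfl⟩ := hA'.exists_properCone
  obtain ⟨B', rfl⟩ := hB'.exists_properCone
  exact equal_chord_functions_at_vertices_general hA hB hAint hBint hA'int hB'int hAup hBdown hA'up
    hB'down hA0 hB0 hA'0 hB'0 hcov hF hG hF' hG' h3
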